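/- Let n ≥ 1, let j, k ∈ ℕ with 1 ≤ j < k, let θ ∈ [j/k, 1], q ∈ [1,∞], α ∈ (0,1), and let p ∈ (1,∞] satisfy 1/p = j/n + θ(−α/n − k/n) + (1−θ)/q. Then there exists a constant C > 0, independent of u, such that for every smooth function u : ℝ^n → ℝ for which the right-hand side is finite, ‖∇^j u‖_{L^p(ℝ^n)} ≤ C · [∇^k u]_α^θ · ‖u‖_{L^q(ℝ^n)}^{1−θ}, where [∇^k u]_α := sup_{x ≠ y} |∇^k u(x) − ∇^k u(y)|/|x − y|^α is the α-Hölder seminorm of the k-th total derivative of u and ‖∇^j u‖_{L^p} is the L^p norm of x ↦ |∇^j u(x)|. -/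

import Mathlib

/-!
The proof rests on a local estimate. Write `H` for a Hölder constant of `∇ᵏu`, `s = k + α`, and
let `T` be the Taylor polynomial of `u` of degree `k` at `x`. The integral remainder gives
`|u (x + y) - T y| ≤ H |y| ^ s` (`abs_sub_taylor_le`). The coefficients of `T` are symmetric
multilinear maps, hence determined by the polynomial function `T`, and on a finite-dimensional space
of polynomials all norms are equivalent; so each coefficient is bounded by an `L¹` norm over the unit
ball (`exists_norm_coeff_le_integral`). Rescaling to radius `r`, with `B` the unit ball,
`r ^ j * |∇ʲu x| ≤ C * (∫_B |u (x + r h)| dh + H * r ^ s)` (`exists_local_bound`).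

By Hölder's inequality, `|∇ʲu x| ≤ C * H * r ^ (s - j)` as soon as
`∫_B |u (x + r h)| ^ q dh ≤ (H * r ^ s) ^ q`. Define a length `R` by `‖u‖_q = H * R ^ (s + n / q)`.
At `r = R` the condition holds at every point, whence `|∇ʲu| ≤ C * H * R ^ (s - j)` everywhere. For
smaller `r` the set where the condition fails has measure controlled by Markov's inequality and
Tonelli's theorem, which gives a weak-type bound for `∇ʲu` with exponent `a = s * q / (s - j)`
(`exists_sup_and_weak_bound`); no maximal function is needed, and `q = 1` is not special.

Since `θ ≥ j / k > j / s`, the balance condition forces `θ < 1` and `q < ∞`, and places `p` strictly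
above `a`. The layer cake formula then interpolates the weak-type bound with the supremum bound
(`lintegral_rpow_le_of_weak_bound`), and the balance condition turns the resulting power of `R` into
`H ^ θ * ‖u‖_q ^ (1 - θ)` (`exists_bound_of_pos`). The cases `H = 0` and `‖u‖_q = 0` follow by
enlarging both numbers by `ε > 0` and letting `ε → 0`.
-/

open MeasureTheory ENNReal

/-! ### Symmetry of iterated derivatives -/

lemma iteratedFDeriv_succ_eq_fderiv_apply {E F : Type*} [NormedAddCommGroup E] [NormedSpace ℝ E]
    [NormedAddCommGroup F] [NormedSpace ℝ F] {f : E → F} (hf : ContDiff ℝ (⊤ : ℕ∞) f)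
    (m : ℕ) (x : E) (v : Fin (m + 1) → E) :
    iteratedFDeriv ℝ (m + 1) f x v =
      fderiv ℝ (fun y => iteratedFDeriv ℝ m f y (Fin.tail v)) x (v 0) := by
  rw [iteratedFDeriv_succ_apply_left]
  have hd : DifferentiableAt ℝ (iteratedFDeriv ℝ m f) x :=
    (hf.differentiable_iteratedFDeriv (by exact_mod_cast WithTop.coe_lt_top m)) x
  rw [fderiv_continuousMultilinear_apply_const_apply hd]

/-- The iterated derivatives of a smooth function are symmetric; Mathlib's
`ContDiffAt.iteratedFDeriv_comp_perm` asks for an analytic function. Induction on the order: a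
transposition of the first two arguments is the symmetry of a second derivative, and any other
adjacent transposition acts on the derivative of one order less. -/
lemma iteratedFDeriv_comp_perm_of_contDiff {E F : Type*} [NormedAddCommGroup E] [NormedSpace ℝ E]
    [NormedAddCommGroup F] [NormedSpace ℝ F] {f : E → F} (hf : ContDiff ℝ (⊤ : ℕ∞) f)
    (m : ℕ) : ∀ (x : E) (v : Fin m → E) (σ : Equiv.Perm (Fin m)),
    iteratedFDeriv ℝ m f x (v ∘ σ) = iteratedFDeriv ℝ m f x v := by
  induction m with
  | zero => intro x v σ; congr 1; exact Subsingleton.elim _ _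
  | succ m ih =>
    -- adjacent transpositions generate the symmetric group
    intro x v σ
    have hσ : σ ∈ Submonoid.closure
        (Set.range fun i : Fin m => Equiv.swap i.castSucc i.succ) := by
      rw [Equiv.Perm.mclosure_swap_castSucc_succ]; trivial
    induction hσ using Submonoid.closure_induction generalizing v with
    | one => simp
    | mul a b _ _ iha ihb =>
      have : v ∘ ⇑(a * b) = (v ∘ a) ∘ b := rfl
      rw [this, ihb, iha]
    | mem τ hτ =>
      obtain ⟨i, rfl⟩ := hτ
      cases m with
      | zero => exact i.elim0
      | succ m =>
        refine Fin.cases ?_ (fun i => ?_) i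
        · have key : ∀ w : Fin (m + 2) → E, iteratedFDeriv ℝ (m + 2) f x w =
              fderiv ℝ (fderiv ℝ (fun y => iteratedFDeriv ℝ m f y (Fin.tail (Fin.tail w)))) x
                (w 0) (w 1) := by
            intro w
            rw [iteratedFDeriv_succ_eq_fderiv_apply hf]
            simp_rw [iteratedFDeriv_succ_eq_fderiv_apply hf m]
            have hg : ContDiff ℝ (⊤ : ℕ∞)
                (fun y => iteratedFDeriv ℝ m f y (Fin.tail (Fin.tail w))) := by
              have := hf.iteratedFDeriv_right (i := m) (m := (⊤ : ℕ∞)) (by exact_mod_cast le_top)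
              exact (ContinuousMultilinearMap.apply ℝ (fun _ : Fin m => E) F
                (Fin.tail (Fin.tail w))).contDiff.comp this
            have hd : DifferentiableAt ℝ
                (fderiv ℝ (fun y => iteratedFDeriv ℝ m f y (Fin.tail (Fin.tail w)))) x :=
              (hg.fderiv_right (m := 1) (by norm_cast)).differentiable (by simp) x
            rw [fderiv_clm_apply hd (by fun_prop)]
            simp [Fin.tail]
          rw [key, key]
          have ht : Fin.tail (Fin.tail (v ∘ Equiv.swap (Fin.castSucc (0 : Fin (m+1))) (Fin.succ 0)))
              = Fin.tail (Fin.tail v) := by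
            ext i
            simp only [Fin.tail, Function.comp]
            rw [Equiv.swap_apply_of_ne_of_ne] <;> simp [Fin.ext_iff]
          have hg : ContDiff ℝ (⊤ : ℕ∞)
              (fun y => iteratedFDeriv ℝ m f y (Fin.tail (Fin.tail v))) := by
            have := hf.iteratedFDeriv_right (i := m) (m := (⊤ : ℕ∞)) (by exact_mod_cast le_top)
            exact (ContinuousMultilinearMap.apply ℝ (fun _ : Fin m => E) F
              (Fin.tail (Fin.tail v))).contDiff.comp this
          rw [ht]
          have hs := (hg.contDiffAt (x := x)).isSymmSndFDerivAt (by
            rw [minSmoothness_of_isRCLikeNormedField]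
            exact WithTop.coe_le_coe.2 (le_top : (2 : ℕ∞) ≤ ⊤))
          simpa using hs.eq (v 1) (v 0)
        · rw [iteratedFDeriv_succ_eq_fderiv_apply hf, iteratedFDeriv_succ_eq_fderiv_apply hf]
          have ht : Fin.tail (v ∘ Equiv.swap (Fin.castSucc (Fin.succ i)) (Fin.succ (Fin.succ i)))
              = Fin.tail v ∘ Equiv.swap (Fin.castSucc i) (Fin.succ i) := by
            ext l
            simp only [Fin.tail, Function.comp]
            rw [← Fin.succ_castSucc, (Fin.succ_injective _).swap_apply]
          rw [ht]
          simp_rw [ih]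
          congr 1

/-! ### Coefficients of a polynomial on the unit ball -/

/-- Equivalence of norms on the finite-dimensional space of tuples `(a 0, …, a k)` of symmetric
multilinear forms: the coefficients are controlled by the `L¹` norm over the unit ball of the
polynomial function `h ↦ ∑ m, a m (h, …, h)`. The tuple `a` is indexed by all of `ℕ` for convenience;
only the entries up to `k` matter. -/
lemma exists_norm_coeff_le_integral {E : Type*} [NormedAddCommGroup E] [NormedSpace ℝ E]
    [FiniteDimensional ℝ E] [MeasurableSpace E] [BorelSpace E] (μ : Measure E)
    [μ.IsAddHaarMeasure] (k : ℕ) :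
    ∃ C : ℝ, 0 < C ∧ ∀ a : (m : ℕ) → ContinuousMultilinearMap ℝ (fun _ : Fin m => E) ℝ,
      (∀ m (v : Fin m → E) (σ : Equiv.Perm (Fin m)), a m (v ∘ σ) = a m v) → ∀ j ≤ k,
      ‖a j‖ ≤ C * ∫ h in Metric.ball (0 : E) 1,
        |∑ m ∈ Finset.range (k + 1), a m (fun _ => h)| ∂μ := by
  classical
  have hfin : ∀ m : ℕ, FiniteDimensional ℝ
      (ContinuousMultilinearMap ℝ (fun _ : Fin m => E) ℝ) := fun m =>
    Module.Finite.of_injective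
      (ContinuousMultilinearMap.toMultilinearMapLinear :
        ContinuousMultilinearMap ℝ (fun _ : Fin m => E) ℝ →ₗ[ℝ] _)
      ContinuousMultilinearMap.toMultilinearMap_injective
  -- the space of jets: tuples of symmetric forms of degrees `0, …, k`
  let S : Submodule ℝ ((m : Fin (k + 1)) → ContinuousMultilinearMap ℝ (fun _ : Fin m => E) ℝ) :=
    { carrier := {a | ∀ (m : Fin (k + 1)) (v : Fin m → E) (σ : Equiv.Perm (Fin m)),
        a m (v ∘ σ) = a m v}
      add_mem' := by
        intro a b ha hb m v σ
        change a m (v ∘ σ) + b m (v ∘ σ) = a m v + b m v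
        rw [ha, hb]
      zero_mem' := fun m v σ => rfl
      smul_mem' := by
        intro c a ha m v σ
        change c * a m (v ∘ σ) = c * a m v
        rw [ha] }
  let P : ((m : Fin (k + 1)) → ContinuousMultilinearMap ℝ (fun _ : Fin m => E) ℝ) →
      E → ℝ := fun a h => ∑ m : Fin (k + 1), a m (fun _ => h)
  have hPc : ∀ a, Continuous (P a) := fun a => by
    refine continuous_finsetSum _ fun m _ => (a m).cont.comp (by fun_prop)
  have hPm : ∀ a, MemLp (P a) 1 (μ.restrict (Metric.ball (0 : E) 1)) := fun a => by
    rw [memLp_one_iff_integrable]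
    exact ((hPc a).continuousOn.integrableOn_compact
      (isCompact_closedBall (0 : E) 1)).mono_set Metric.ball_subset_closedBall
  -- a jet is sent to the class of its polynomial function in `L¹` of the unit ball
  let L : S →ₗ[ℝ] Lp ℝ 1 (μ.restrict (Metric.ball (0 : E) 1)) :=
    { toFun := fun a => (hPm a).toLp
      map_add' := by
        intro a b
        rw [← MemLp.toLp_add]
        congr 1
        ext h
        exact Finset.sum_add_distrib
      map_smul' := by
        intro c a
        rw [RingHom.id_apply, ← MemLp.toLp_const_smul]
        congr 1
        ext h
        exact (Finset.mul_sum _ _ _).symm }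
  have hker : LinearMap.ker L = ⊥ := by
    rw [LinearMap.ker_eq_bot']
    rintro ⟨a, ha⟩ h0
    have hae : P a =ᵐ[μ.restrict (Metric.ball (0 : E) 1)] 0 := by
      have h1 : (hPm a).toLp = 0 := h0
      have h2 := (hPm a).coeFn_toLp
      rw [h1] at h2
      exact h2.symm.trans (Lp.coeFn_zero _ _ _)
    have hz : Set.EqOn (P a) 0 (Metric.ball (0 : E) 1) :=
      Measure.eqOn_open_of_ae_eq hae Metric.isOpen_ball (hPc a).continuousOn
        continuousOn_const
    -- `t ↦ P a (t • h)` is a real polynomial vanishing on `(0, 1)`, so its coefficients vanish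
    have hcoef : ∀ h ∈ Metric.ball (0 : E) 1, ∀ m : Fin (k + 1), a m (fun _ => h) = 0 := by
      intro h hh m
      let Q : Polynomial ℝ := ∑ m : Fin (k + 1), Polynomial.monomial m (a m (fun _ => h))
      have hQ : Q = 0 := by
        refine Polynomial.eq_zero_of_infinite_isRoot _ (Set.Infinite.mono ?_
          (Set.Ioo_infinite (show (0 : ℝ) < 1 by norm_num)))
        intro t ht
        have hth : t • h ∈ Metric.ball (0 : E) 1 := by
          simp only [Metric.mem_ball, dist_zero_right] at hh ⊢
          rw [norm_smul, Real.norm_of_nonneg ht.1.le]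
          nlinarith [ht.1, ht.2, norm_nonneg h]
        have := hz hth
        simp only [P, Pi.zero_apply] at this
        simp only [Set.mem_ofPred_eq, Polynomial.IsRoot.def, Q, Polynomial.eval_finsetSum,
          Polynomial.eval_monomial]
        rw [← this]
        refine Finset.sum_congr rfl fun m _ => ?_
        rw [(a m).map_smul_univ (fun _ => t) (fun _ => h)]
        simp [mul_comm]
      have := congrArg (fun Q => Polynomial.coeff Q m) hQ
      simpa [Q, Polynomial.finsetSum_coeff, Polynomial.coeff_monomial, Fin.val_inj] using this
    -- polarization: the `m`-th derivative of the diagonal restriction is `m !` times the form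
    ext m v
    have hev : (fun x : E => a m (fun _ => x)) =ᶠ[nhds 0] fun _ => (0 : ℝ) := by
      filter_upwards [Metric.ball_mem_nhds (0 : E) one_pos] with h hh using hcoef h hh m
    have h1 := (a m).iteratedFDeriv_comp_diagonal 0 v
    rw [(hev.iteratedFDeriv ℝ m).eq_of_nhds] at h1
    have h2 : ∀ σ : Equiv.Perm (Fin m), a m (fun i => v (σ i)) = a m v := fun σ => ha m v σ
    simp only [h2, iteratedFDeriv_fun_zero] at h1
    change a m v = 0
    simpa [Nat.factorial_ne_zero, Fintype.card_perm] using h1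
  -- an injective linear map on a finite-dimensional space is bounded below
  have : FiniteDimensional ℝ S := inferInstance
  obtain ⟨K, hK, hanti⟩ := LinearMap.exists_antilipschitzWith
    (𝕜 := ℝ) (E := S) (F := Lp ℝ 1 (μ.restrict (Metric.ball (0 : E) 1))) L hker
  refine ⟨K, hK, fun a ha j hj => ?_⟩
  let b : S := ⟨fun m => a m, fun m v σ => ha m v σ⟩
  have h1 : ‖a j‖ ≤ ‖b‖ := norm_le_pi_norm
    (b : ((m : Fin (k + 1)) → ContinuousMultilinearMap ℝ (fun _ : Fin m => E) ℝ)) ⟨j, by omega⟩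
  have h2 : ‖b‖ ≤ K * ‖L b‖ := by
    have := hanti.le_mul_dist b 0
    rw [map_zero, dist_zero_right (L b)] at this
    exact (dist_zero_right b).symm.trans_le this
  have h3 : ‖L b‖ = ∫ h in Metric.ball (0 : E) 1,
        |∑ m ∈ Finset.range (k + 1), a m (fun _ => h)| ∂μ := by
    rw [L1.norm_eq_integral_norm]
    refine integral_congr_ae ?_
    filter_upwards [(hPm b).coeFn_toLp] with h hh
    refine (congrArg norm hh).trans ?_
    rw [Real.norm_eq_abs]
    simp only [P, b]
    rw [Fin.sum_univ_eq_sum_range (fun m => a m (fun _ => h))]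
  rw [← h3]
  exact h1.trans h2

/-! ### The local estimate -/

/-- Taylor's formula of order `k` when the `k`-th derivative is `α`-Hölder with constant `H`: the
error is at most `H * ‖y‖ ^ (k + α)`. -/
lemma abs_sub_taylor_le {E : Type*} [NormedAddCommGroup E] [NormedSpace ℝ E]
    {u : E → ℝ} (hu : ContDiff ℝ (⊤ : ℕ∞) u) {k : ℕ} (hk : 1 ≤ k) {α H : ℝ} (hα : 0 < α)
    (hH : 0 ≤ H)
    (hold : ∀ x y, ‖iteratedFDeriv ℝ k u x - iteratedFDeriv ℝ k u y‖ ≤ H * dist x y ^ α)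
    (x y : E) :
    |u (x + y) - ∑ m ∈ Finset.range (k + 1),
      (m.factorial : ℝ)⁻¹ * iteratedFDeriv ℝ m u x (fun _ => y)| ≤ H * ‖y‖ ^ (k + α) := by
  obtain ⟨n, rfl⟩ : ∃ n, k = n + 1 := ⟨k - 1, by omega⟩
  have hT := map_add_eq_sum_add_integral_iteratedFDeriv (f := u) (x := x) (y := y) (n := n)
    (fun t _ => (hu.of_le (by exact_mod_cast le_top)).contDiffAt)
  have hcont : Continuous fun t : ℝ => iteratedFDeriv ℝ (n + 1) u (x + t • y) (fun _ => y) := by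
    have h1 : Continuous (iteratedFDeriv ℝ (n + 1) u) :=
      hu.continuous_iteratedFDeriv (by exact_mod_cast le_top)
    exact (ContinuousMultilinearMap.apply ℝ (fun _ : Fin (n + 1) => E) ℝ
      (fun _ => y)).continuous.comp (h1.comp (by fun_prop))
  have hint : ∫ t in (0 : ℝ)..1, (1 - t) ^ n = ((n : ℝ) + 1)⁻¹ := by
    rw [intervalIntegral.integral_comp_sub_left (fun t => t ^ n)]
    simp
  -- the term of degree `k` as an integral against the remainder kernel, to subtract it there
  have hlast : (((n + 1).factorial : ℕ) : ℝ)⁻¹ * iteratedFDeriv ℝ (n + 1) u x (fun _ => y) =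
      ((n.factorial : ℕ) : ℝ)⁻¹ *
        ∫ t in (0 : ℝ)..1, (1 - t) ^ n * iteratedFDeriv ℝ (n + 1) u x (fun _ => y) := by
    rw [intervalIntegral.integral_mul_const, hint, Nat.factorial_succ]
    push_cast
    rw [mul_inv]
    ring
  rw [Finset.sum_range_succ, hT, hlast]
  simp only [smul_eq_mul]
  rw [add_sub_add_left_eq_sub, ← mul_sub, ← intervalIntegral.integral_sub
    (Continuous.intervalIntegrable (by fun_prop) _ _)
    (Continuous.intervalIntegrable (by fun_prop) _ _), abs_mul]
  have hb : ∀ t ∈ Set.uIoc (0 : ℝ) 1,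
      ‖(1 - t) ^ n * iteratedFDeriv ℝ (n + 1) u (x + t • y) (fun _ => y) -
        (1 - t) ^ n * iteratedFDeriv ℝ (n + 1) u x (fun _ => y)‖ ≤
        H * ‖y‖ ^ (((n + 1 : ℕ) : ℝ) + α) := by
    intro t ht
    rw [Set.uIoc_of_le zero_le_one] at ht
    rw [← mul_sub, norm_mul, norm_pow, Real.norm_of_nonneg (by linarith [ht.2])]
    have h1 : (1 - t) ^ n ≤ 1 := pow_le_one₀ (by linarith [ht.2]) (by linarith [ht.1])
    have h2 : ‖iteratedFDeriv ℝ (n + 1) u (x + t • y) (fun _ => y) -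
        iteratedFDeriv ℝ (n + 1) u x (fun _ => y)‖ ≤ H * ‖y‖ ^ α * ‖y‖ ^ (n + 1) := by
      have := (iteratedFDeriv ℝ (n + 1) u (x + t • y) -
        iteratedFDeriv ℝ (n + 1) u x).le_opNorm (fun _ => y)
      rw [Finset.prod_const, Finset.card_univ, Fintype.card_fin] at this
      refine this.trans ?_
      gcongr
      refine (hold _ _).trans ?_
      gcongr
      rw [dist_self_add_left, norm_smul, Real.norm_of_nonneg ht.1.le]
      exact mul_le_of_le_one_left (norm_nonneg _) ht.2
    calc _ ≤ 1 * (H * ‖y‖ ^ α * ‖y‖ ^ (n + 1)) := by gcongr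
      _ = _ := by
        rw [Real.rpow_add_of_nonneg (norm_nonneg _) (by positivity) hα.le, Real.rpow_natCast]
        ring
  have h3 := intervalIntegral.norm_integral_le_of_norm_le_const hb
  rw [sub_zero, abs_one, mul_one, Real.norm_eq_abs] at h3
  have h4 : |((n.factorial : ℕ) : ℝ)⁻¹| ≤ 1 := by
    rw [abs_of_nonneg (by positivity)]
    exact inv_le_one_of_one_le₀ (by exact_mod_cast Nat.factorial_pos n)
  calc _ ≤ 1 * (H * ‖y‖ ^ (((n + 1 : ℕ) : ℝ) + α)) := by gcongr
    _ = _ := one_mul _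

/-- The local estimate: `∇ʲu x` is bounded by the mean of `|u|` over the ball of radius `r` around
`x`, up to an error governed by the Hölder constant of `∇ᵏu`. The mean is written as an integral over
the unit ball, so that its dependence on `x` and `r` is explicit. -/
lemma exists_local_bound {E : Type*} [NormedAddCommGroup E] [NormedSpace ℝ E]
    [FiniteDimensional ℝ E] [MeasurableSpace E] [BorelSpace E] (μ : Measure E)
    [μ.IsAddHaarMeasure] {j k : ℕ} (hk : 1 ≤ k) (hjk : j ≤ k) {α : ℝ} (hα : 0 < α) :
    ∃ C : ℝ, 0 < C ∧ ∀ u : E → ℝ, ContDiff ℝ (⊤ : ℕ∞) u → ∀ H : ℝ, 0 ≤ H →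
      (∀ x y, ‖iteratedFDeriv ℝ k u x - iteratedFDeriv ℝ k u y‖ ≤ H * dist x y ^ α) →
      ∀ (x : E) (r : ℝ), 0 < r → r ^ j * ‖iteratedFDeriv ℝ j u x‖ ≤
        C * ((∫ h in Metric.ball (0 : E) 1, |u (x + r • h)| ∂μ) + H * r ^ (k + α)) := by
  obtain ⟨C₀, hC₀, hC⟩ := exists_norm_coeff_le_integral μ k
  set V := μ.real (Metric.ball (0 : E) 1) with hV
  refine ⟨j.factorial * C₀ * (1 + V), by positivity, fun u hu H hH hold x r hr => ?_⟩
  have hu0 := hu.continuous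
  have h1 := hC (fun m => (r ^ m * (m.factorial : ℝ)⁻¹) • iteratedFDeriv ℝ m u x)
    (fun m v σ => by
      change _ * iteratedFDeriv ℝ m u x (v ∘ σ) = _ * iteratedFDeriv ℝ m u x v
      rw [iteratedFDeriv_comp_perm_of_contDiff hu]) j hjk
  rw [norm_smul, Real.norm_of_nonneg (by positivity)] at h1
  set T : E → ℝ := fun h => ∑ m ∈ Finset.range (k + 1),
    ((r ^ m * (m.factorial : ℝ)⁻¹) • iteratedFDeriv ℝ m u x) (fun _ => h) with hTdef
  have hTc : Continuous T := by
    refine continuous_finsetSum _ fun m _ =>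
      (ContinuousMultilinearMap.cont _).comp (by fun_prop)
  have hpt : ∀ h ∈ Metric.ball (0 : E) 1, |T h| ≤ |u (x + r • h)| + H * r ^ (k + α) := by
    intro h hh
    have h2 := abs_sub_taylor_le hu hk hα hH hold x (r • h)
    have h3 : ∑ m ∈ Finset.range (k + 1),
        (m.factorial : ℝ)⁻¹ * iteratedFDeriv ℝ m u x (fun _ => r • h) = T h := by
      refine Finset.sum_congr rfl fun m _ => ?_
      rw [(iteratedFDeriv ℝ m u x).map_smul_univ (fun _ => r) (fun _ => h)]
      change _ = (r ^ m * (m.factorial : ℝ)⁻¹) * iteratedFDeriv ℝ m u x (fun _ => h)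
      simp
      ring
    rw [h3] at h2
    have h4 : ‖r • h‖ ≤ r := by
      rw [norm_smul, Real.norm_of_nonneg hr.le]
      exact mul_le_of_le_one_right hr.le (by simpa using (Metric.mem_ball.1 hh).le)
    have h5 : H * ‖r • h‖ ^ (k + α) ≤ H * r ^ (k + α) := by gcongr
    have h6 := abs_sub_abs_le_abs_sub (T h) (u (x + r • h))
    rw [abs_sub_comm] at h6
    linarith
  have hi : ∀ g : E → ℝ, Continuous g → IntegrableOn g (Metric.ball (0 : E) 1) μ := fun g hg =>
    (hg.continuousOn.integrableOn_compact
      (isCompact_closedBall (0 : E) 1)).mono_set Metric.ball_subset_closedBall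
  have h7 : ∫ h in Metric.ball (0 : E) 1, |T h| ∂μ ≤
      (∫ h in Metric.ball (0 : E) 1, |u (x + r • h)| ∂μ) + V * (H * r ^ (k + α)) := by
    have hi1 : IntegrableOn (fun h => |u (x + r • h)|) (Metric.ball (0 : E) 1) μ :=
      hi _ (by fun_prop)
    have hi2 : IntegrableOn (fun _ : E => H * r ^ (k + α)) (Metric.ball (0 : E) 1) μ :=
      hi _ (by fun_prop)
    calc _ ≤ ∫ h in Metric.ball (0 : E) 1, (|u (x + r • h)| + H * r ^ (k + α)) ∂μ :=
          setIntegral_mono_on (hi _ hTc.abs) (hi1.add hi2) measurableSet_ball hpt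
      _ = _ := by
        rw [integral_add hi1 hi2, setIntegral_const, smul_eq_mul]
  have hI : 0 ≤ ∫ h in Metric.ball (0 : E) 1, |u (x + r • h)| ∂μ :=
    integral_nonneg fun _ => abs_nonneg _
  have hV0 : 0 ≤ V := by positivity
  have hR : 0 ≤ H * r ^ (k + α) := by positivity
  have hf : (0 : ℝ) < j.factorial := by positivity
  set I := ∫ h in Metric.ball (0 : E) 1, |u (x + r • h)| ∂μ
  calc r ^ j * ‖iteratedFDeriv ℝ j u x‖
      = j.factorial * (r ^ j * (j.factorial : ℝ)⁻¹ * ‖iteratedFDeriv ℝ j u x‖) := by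
        field_simp
    _ ≤ j.factorial * (C₀ * (I + V * (H * r ^ (k + α)))) := by
        exact mul_le_mul_of_nonneg_left
          (h1.trans (mul_le_mul_of_nonneg_left h7 hC₀.le)) hf.le
    _ ≤ j.factorial * (C₀ * ((1 + V) * (I + H * r ^ (k + α)))) := by
        gcongr
        nlinarith [mul_nonneg hV0 hI]
    _ = _ := by ring

/-- If the `L^q` size of `u` around `x` at scale `r` is at most the Taylor error `H * r ^ (k + α)`,
the latter alone bounds `∇ʲu x`. Follows from the local estimate and Hölder's inequality on the unit
ball. -/
lemma exists_local_bound_of_lintegral_le {E : Type*} [NormedAddCommGroup E] [NormedSpace ℝ E]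
    [FiniteDimensional ℝ E] [MeasurableSpace E] [BorelSpace E] (μ : Measure E)
    [μ.IsAddHaarMeasure] {j k : ℕ} (hk : 1 ≤ k) (hjk : j ≤ k) {α : ℝ} (hα : 0 < α)
    {q : ℝ} (hq : 1 ≤ q) :
    ∃ C : ℝ, 0 < C ∧ ∀ u : E → ℝ, ContDiff ℝ (⊤ : ℕ∞) u → ∀ H : ℝ, 0 ≤ H →
      (∀ x y, ‖iteratedFDeriv ℝ k u x - iteratedFDeriv ℝ k u y‖ ≤ H * dist x y ^ α) →
      ∀ (x : E) (r : ℝ), 0 < r →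
      (∫⁻ h in Metric.ball (0 : E) 1, ‖u (x + r • h)‖ₑ ^ q ∂μ ≤
        ENNReal.ofReal ((H * r ^ (k + α)) ^ q)) →
      ‖iteratedFDeriv ℝ j u x‖ ≤ C * (H * r ^ (k + α - j)) := by
  obtain ⟨C₀, hC₀, hC⟩ := exists_local_bound μ hk hjk hα
  have hq0 : 0 < q := by linarith
  set V := μ (Metric.ball (0 : E) 1) ^ (1 - 1 / q) with hV
  have hVtop : V ≠ ⊤ := by
    refine ENNReal.rpow_ne_top_of_nonneg ?_ measure_ball_lt_top.ne
    rw [sub_nonneg]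
    exact (div_le_one hq0).2 hq
  refine ⟨C₀ * (V.toReal + 1), by positivity, fun u hu H hH hold x r hr hΦ => ?_⟩
  have hu0 := hu.continuous
  have hA : 0 ≤ H * r ^ (k + α) := by positivity
  have hI : (∫ h in Metric.ball (0 : E) 1, |u (x + r • h)| ∂μ) ≤ V.toReal * (H * r ^ (k + α)) := by
    have hcont : Continuous fun h : E => u (x + r • h) := by fun_prop
    have hint : IntegrableOn (fun h => u (x + r • h)) (Metric.ball (0 : E) 1) μ :=
      (hcont.continuousOn.integrableOn_compact
      (isCompact_closedBall (0 : E) 1)).mono_set Metric.ball_subset_closedBall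
    have h1 := ofReal_integral_norm_eq_lintegral_enorm hint
    have h2 := eLpNorm_le_eLpNorm_mul_rpow_measure_univ (p := 1) (q := ENNReal.ofReal q)
      (μ := μ.restrict (Metric.ball (0 : E) 1)) (f := fun h => u (x + r • h))
      (by simpa using hq) hcont.aestronglyMeasurable
    rw [eLpNorm_one_eq_lintegral_enorm, ← h1, eLpNorm_eq_lintegral_rpow_enorm_toReal
      (by simpa using hq0) ENNReal.ofReal_ne_top, ENNReal.toReal_ofReal hq0.le,
      Measure.restrict_apply_univ, ENNReal.toReal_one, div_one, ← hV] at h2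
    have h3 : (∫⁻ h in Metric.ball (0 : E) 1, ‖u (x + r • h)‖ₑ ^ q ∂μ) ^ (1 / q) ≤
        ENNReal.ofReal (H * r ^ (k + α)) := by
      calc _ ≤ ENNReal.ofReal ((H * r ^ (k + α)) ^ q) ^ (1 / q) := by gcongr
        _ = _ := by
          rw [ENNReal.ofReal_rpow_of_nonneg (by positivity) (by positivity),
            ← Real.rpow_mul hA, mul_one_div_cancel hq0.ne', Real.rpow_one]
    have h4 : ENNReal.ofReal (∫ h in Metric.ball (0 : E) 1, |u (x + r • h)| ∂μ) ≤
        ENNReal.ofReal (V.toReal * (H * r ^ (k + α))) := by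
      rw [ENNReal.ofReal_mul ENNReal.toReal_nonneg, ENNReal.ofReal_toReal hVtop, mul_comm V]
      exact h2.trans (by gcongr)
    exact (ENNReal.ofReal_le_ofReal_iff (by positivity)).1 h4
  have h5 := hC u hu H hH hold x r hr
  have h6 : r ^ j * ‖iteratedFDeriv ℝ j u x‖ ≤
      r ^ j * (C₀ * (V.toReal + 1) * (H * r ^ (k + α - j))) := by
    have h7 : r ^ (k + α) = r ^ (k + α - j) * r ^ j := by
      rw [← Real.rpow_natCast r j, ← Real.rpow_add hr]
      congr 1
      ring
    calc _ ≤ C₀ * (V.toReal * (H * r ^ (k + α)) + H * r ^ (k + α)) :=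
          h5.trans (by gcongr)
      _ = _ := by rw [h7]; ring
  exact le_of_mul_le_mul_left h6 (by positivity)

/-! ### Supremum and weak-type bounds -/

lemma setLIntegral_comp_add_smul_le {E : Type*} [NormedAddCommGroup E] [NormedSpace ℝ E]
    [FiniteDimensional ℝ E] [MeasurableSpace E] [BorelSpace E] (μ : Measure E)
    [μ.IsAddHaarMeasure] {g : E → ℝ≥0∞} (hg : Measurable g) (s : Set E) (x : E) {r : ℝ}
    (hr : 0 < r) :
    ∫⁻ h in s, g (x + r • h) ∂μ ≤
      ENNReal.ofReal ((r ^ Module.finrank ℝ E)⁻¹) * ∫⁻ y, g y ∂μ := by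
  calc _ ≤ ∫⁻ h, g (x + r • h) ∂μ := setLIntegral_le_lintegral _ _
    _ = ∫⁻ y, g (x + y) ∂(Measure.map (fun h => r • h) μ) := by
      rw [lintegral_map (by fun_prop) (by fun_prop)]
    _ = _ := by
      rw [Measure.map_addHaar_smul μ hr.ne', lintegral_smul_measure,
        lintegral_add_left_eq_self, abs_of_nonneg (by positivity), smul_eq_mul]

lemma lintegral_setLIntegral_comp_add_smul {E : Type*} [NormedAddCommGroup E] [NormedSpace ℝ E]
    [FiniteDimensional ℝ E] [MeasurableSpace E] [BorelSpace E] (μ : Measure E)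
    [μ.IsAddHaarMeasure] {g : E → ℝ≥0∞} (hg : Measurable g) (s : Set E) (r : ℝ) :
    ∫⁻ x, ∫⁻ h in s, g (x + r • h) ∂μ ∂μ = μ s * ∫⁻ y, g y ∂μ := by
  rw [lintegral_lintegral_swap (by fun_prop)]
  simp_rw [lintegral_add_right_eq_self]
  rw [setLIntegral_const, mul_comm]

/-- With the length `R` defined by `‖u‖_q = H * R ^ (k + α + n / q)` (the hypothesis asks only for
`≤`), `∇ʲu` is bounded by a multiple of `H * R ^ (k + α - j)` and satisfies a weak-type bound with
exponent `(k + α) * q / (k + α - j)`. Both come from `exists_local_bound_of_lintegral_le`, with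
radius `R` for the first and a multiple of `R` depending on the height for the second. -/
lemma exists_sup_and_weak_bound {E : Type*} [NormedAddCommGroup E] [NormedSpace ℝ E]
    [FiniteDimensional ℝ E] [MeasurableSpace E] [BorelSpace E] (μ : Measure E)
    [μ.IsAddHaarMeasure] {j k : ℕ} (hk : 1 ≤ k) (hjk : j ≤ k) {α : ℝ} (hα : 0 < α)
    {q : ℝ} (hq : 1 ≤ q) :
    ∃ C : ℝ, 0 < C ∧ ∀ u : E → ℝ, ContDiff ℝ (⊤ : ℕ∞) u → ∀ H : ℝ, 0 < H →
      (∀ x y, ‖iteratedFDeriv ℝ k u x - iteratedFDeriv ℝ k u y‖ ≤ H * dist x y ^ α) →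
      ∀ R : ℝ, 0 < R →
      (∫⁻ x, ‖u x‖ₑ ^ q ∂μ ≤
        ENNReal.ofReal ((H * R ^ (k + α + Module.finrank ℝ E / q)) ^ q)) →
      (∀ x, ‖iteratedFDeriv ℝ j u x‖ ≤ C * (H * R ^ (k + α - j))) ∧
      ∀ τ : ℝ, 0 < τ →
        μ {x | τ * (C * (H * R ^ (k + α - j))) < ‖iteratedFDeriv ℝ j u x‖} ≤
          ENNReal.ofReal (C * R ^ Module.finrank ℝ E * τ ^ (-((k + α) * q / (k + α - j)))) := by
  obtain ⟨C₀, hC₀, hC⟩ := exists_local_bound_of_lintegral_le (j := j) μ hk hjk hα hq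
  have hq0 : 0 < q := by linarith
  have hjk' : (j : ℝ) ≤ k := by exact_mod_cast hjk
  have hsj : 0 < (k : ℝ) + α - j := by linarith
  set d := Module.finrank ℝ E
  set V := μ.real (Metric.ball (0 : E) 1) with hV
  have hV0 : 0 ≤ V := by positivity
  refine ⟨C₀ + V, by positivity, fun u hu H hH hold R hR hN => ?_⟩
  have hgm : Measurable fun x => ‖u x‖ₑ ^ q := by
    have := hu.continuous.measurable
    fun_prop
  have hRd : (H * R ^ (k + α + d / q)) ^ q = R ^ d * (H * R ^ (k + α)) ^ q := by
    rw [Real.rpow_add hR, ← mul_assoc, Real.mul_rpow (by positivity) (by positivity),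
      ← Real.rpow_mul hR.le, div_mul_cancel₀ _ hq0.ne', Real.rpow_natCast]
    ring
  constructor
  · intro x
    refine (hC u hu H hH.le hold x R hR ?_).trans (by gcongr; linarith)
    refine (setLIntegral_comp_add_smul_le μ hgm _ x hR).trans ?_
    calc _ ≤ ENNReal.ofReal ((R ^ d)⁻¹) *
          ENNReal.ofReal ((H * R ^ (k + α + d / q)) ^ q) := by gcongr
      _ = _ := by
        rw [← ENNReal.ofReal_mul (by positivity), hRd, inv_mul_cancel_left₀ (by positivity)]
  · intro τ hτ
    -- the radius at which the two terms of the local estimate balance at height `τ`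
    set r := R * τ ^ ((k + α - j)⁻¹) with hr_def
    have hr : 0 < r := by positivity
    have hrj : r ^ (k + α - j) = τ * R ^ (k + α - j) := by
      rw [hr_def, Real.mul_rpow hR.le (by positivity), ← Real.rpow_mul hτ.le,
        inv_mul_cancel₀ hsj.ne', Real.rpow_one, mul_comm]
    have hrs : (H * r ^ (k + α)) ^ q =
        (H * R ^ (k + α)) ^ q * τ ^ ((k + α) * q / (k + α - j)) := by
      rw [hr_def, Real.mul_rpow hR.le (by positivity), ← Real.rpow_mul hτ.le, ← mul_assoc,
        Real.mul_rpow (by positivity) (by positivity), ← Real.rpow_mul hτ.le]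
      congr 2
      field_simp
    have hsub : {x | τ * ((C₀ + V) * (H * R ^ (k + α - j))) < ‖iteratedFDeriv ℝ j u x‖} ⊆
        {x | ENNReal.ofReal ((H * r ^ (k + α)) ^ q) ≤
          ∫⁻ h in Metric.ball (0 : E) 1, ‖u (x + r • h)‖ₑ ^ q ∂μ} := by
      intro x hx
      by_contra hlt
      simp only [Set.mem_ofPred_eq, not_le] at hx hlt
      have h1 := hC u hu H hH.le hold x r hr hlt.le
      rw [hrj] at h1
      have h2 : C₀ * (H * (τ * R ^ (k + α - j))) ≤
          τ * ((C₀ + V) * (H * R ^ (k + α - j))) := by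
        have : 0 ≤ τ * (V * (H * R ^ (k + α - j))) := by positivity
        linarith
      linarith
    refine (measure_mono hsub).trans ?_
    have hpos : 0 < (H * r ^ (k + α)) ^ q := by positivity
    have hmeas : Measurable fun x => ∫⁻ h in Metric.ball (0 : E) 1, ‖u (x + r • h)‖ₑ ^ q ∂μ := by
      refine Measurable.lintegral_prod_right' (f := fun z : E × E => ‖u (z.1 + r • z.2)‖ₑ ^ q) ?_
      have := hu.continuous.measurable
      fun_prop
    refine (meas_ge_le_lintegral_div hmeas.aemeasurable (by simpa using hpos)
      ENNReal.ofReal_ne_top).trans ?_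
    rw [lintegral_setLIntegral_comp_add_smul μ hgm]
    calc _ ≤ ENNReal.ofReal V * ENNReal.ofReal ((H * R ^ (k + α + d / q)) ^ q) /
          ENNReal.ofReal ((H * r ^ (k + α)) ^ q) := by
          gcongr
          rw [hV, ofReal_measureReal measure_ball_lt_top.ne]
      _ = ENNReal.ofReal (V * R ^ d * τ ^ (-((k + α) * q / (k + α - j)))) := by
          rw [← ENNReal.ofReal_mul hV0, ← ENNReal.ofReal_div_of_pos hpos, hRd, hrs,
            Real.rpow_neg hτ.le]
          congr 1
          field_simp
      _ ≤ _ := by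
          gcongr
          linarith

/-! ### Interpolation -/

/-- A function bounded by `M` and of weak type `a` has a finite `p`-th moment for every `p > a`: in
the layer cake formula only the heights up to `M` contribute, and `τ ^ (p - a - 1)` is integrable
near `0`. -/
lemma lintegral_rpow_le_of_weak_bound {X : Type*} [MeasurableSpace X] {μ : Measure X}
    {G : X → ℝ} (hG : Measurable G) (hG0 : ∀ x, 0 ≤ G x) {M K a p : ℝ} (hM : 0 < M)
    (hK : 0 ≤ K) (hp : 0 < p) (hap : a < p) (hGM : ∀ x, G x ≤ M)
    (hweak : ∀ τ : ℝ, 0 < τ → μ {x | τ * M < G x} ≤ ENNReal.ofReal (K * τ ^ (-a))) :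
    ∫⁻ x, ENNReal.ofReal (G x ^ p) ∂μ ≤ ENNReal.ofReal (M ^ p * (p * (K / (p - a)))) := by
  have hpa : 0 < p - a := by linarith
  have h1 : ∀ x, ENNReal.ofReal (G x ^ p) =
      ENNReal.ofReal (M ^ p) * ENNReal.ofReal ((G x / M) ^ p) := by
    intro x
    rw [← ENNReal.ofReal_mul (by positivity), Real.div_rpow (hG0 x) hM.le,
      mul_div_cancel₀ _ (by positivity)]
  simp_rw [h1]
  rw [lintegral_const_mul _ (by fun_prop), ENNReal.ofReal_mul (by positivity)]
  gcongr
  rw [lintegral_rpow_eq_lintegral_meas_lt_mul μ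
    (Filter.Eventually.of_forall fun x => div_nonneg (hG0 x) hM.le)
    (hG.div_const M).aemeasurable hp, ENNReal.ofReal_mul hp.le]
  gcongr
  have hint : IntegrableOn (fun τ : ℝ => K * τ ^ (p - a - 1)) (Set.Ioc 0 1) := by
    have := intervalIntegral.intervalIntegrable_rpow' (a := 0) (b := 1)
      (show -1 < p - a - 1 by linarith)
    exact ((intervalIntegrable_iff_integrableOn_Ioc_of_le zero_le_one).1 this).const_mul K
  calc ∫⁻ τ in Set.Ioi (0 : ℝ), μ {x | τ < G x / M} * ENNReal.ofReal (τ ^ (p - 1))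
      ≤ ∫⁻ τ in Set.Ioi (0 : ℝ), (Set.Ioc (0 : ℝ) 1).indicator
          (fun τ => ENNReal.ofReal (K * τ ^ (p - a - 1))) τ := by
        refine setLIntegral_mono' measurableSet_Ioi fun τ hτ => ?_
        rw [Set.mem_Ioi] at hτ
        by_cases h : τ ≤ 1
        · rw [Set.indicator_of_mem (show τ ∈ Set.Ioc (0 : ℝ) 1 from ⟨hτ, h⟩)]
          have h2 : {x | τ < G x / M} = {x | τ * M < G x} := by
            ext x
            simp only [Set.mem_ofPred_eq, lt_div_iff₀ hM]
          rw [h2]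
          calc _ ≤ ENNReal.ofReal (K * τ ^ (-a)) * ENNReal.ofReal (τ ^ (p - 1)) := by
                gcongr
                exact hweak τ hτ
            _ = _ := by
                rw [← ENNReal.ofReal_mul (by positivity), mul_assoc, ← Real.rpow_add hτ]
                congr 3
                ring
        · have h2 : {x | τ < G x / M} = ∅ := by
            ext x
            simp only [Set.mem_ofPred_eq, Set.mem_empty_iff_false, iff_false, not_lt]
            exact ((div_le_one hM).2 (hGM x)).trans (not_le.1 h).le
          rw [h2]
          simp
    _ = ∫⁻ τ in Set.Ioc (0 : ℝ) 1, ENNReal.ofReal (K * τ ^ (p - a - 1)) := by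
        rw [lintegral_indicator measurableSet_Ioc, Measure.restrict_restrict measurableSet_Ioc,
          Set.inter_eq_left.2 Set.Ioc_subset_Ioi_self]
    _ = ENNReal.ofReal (K / (p - a)) := by
        rw [← ofReal_integral_eq_lintegral_ofReal hint
          ((ae_restrict_iff' measurableSet_Ioc).2 (Filter.Eventually.of_forall fun τ hτ =>
            mul_nonneg hK (Real.rpow_nonneg hτ.1.le _))),
          ← intervalIntegral.integral_of_le zero_le_one, intervalIntegral.integral_const_mul,
          integral_rpow (Or.inl (by linarith))]
        congr 1
        rw [Real.one_rpow, sub_add_cancel, Real.zero_rpow hpa.ne']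
        ring
    _ ≤ _ := le_rfl

/-- The interpolation inequality for a finite exponent `q`, with a positive Hölder
constant `H` and a positive bound `N` for `‖u‖_q`. -/
lemma exists_bound_of_pos
    (n : ℕ) (hn : 1 ≤ n) (j k : ℕ) (hj : 1 ≤ j) (hjk : j < k)
    (θ : ℝ) (hθ : (j : ℝ) / k ≤ θ)
    (q : ℝ) (hq : 1 ≤ q) (α : ℝ) (hα : 0 < α) (p : ℝ≥0∞) (hp1 : 1 < p)
    (hbal : p⁻¹.toReal =
      (j : ℝ) / n + θ * (-α / n - (k : ℝ) / n) + (1 - θ) * q⁻¹) :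
    ∃ C : ℝ, 0 < C ∧ ∀ u : EuclideanSpace ℝ (Fin n) → ℝ, ContDiff ℝ (⊤ : ℕ∞) u →
      ∀ N : ℝ, 0 < N → eLpNorm u (ENNReal.ofReal q) volume ≤ ENNReal.ofReal N →
      ∀ H : ℝ, 0 < H →
      (∀ x y, ‖iteratedFDeriv ℝ k u x - iteratedFDeriv ℝ k u y‖ ≤ H * dist x y ^ α) →
      eLpNorm (iteratedFDeriv ℝ j u) p volume ≤
        ENNReal.ofReal (C * (H ^ θ * N ^ (1 - θ))) := by
  obtain ⟨C, hC, hmain⟩ := exists_sup_and_weak_bound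
    (volume : Measure (EuclideanSpace ℝ (Fin n))) (j := j) (k := k) (by omega) hjk.le hα hq
  rw [finrank_euclideanSpace_fin] at hmain
  have hq0 : 0 < q := by linarith
  have hn0 : (0 : ℝ) < n := by exact_mod_cast hn
  have hj0 : (0 : ℝ) < j := by exact_mod_cast hj
  have hk0 : (0 : ℝ) < k := by exact_mod_cast (by omega : 0 < k)
  have hjk' : (j : ℝ) < k := by exact_mod_cast hjk
  have hsj : 0 < (k : ℝ) + α - j := by linarith
  have hS : 0 < (k : ℝ) + α + n / q := by positivity
  have hexp : (1 - θ) * (k + α + n / q) = k + α - j + n * p⁻¹.toReal := by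
    rw [hbal]
    field_simp
    ring
  -- with `N = H * R ^ (k + α + n / q)` both sides become powers of the single length `R`
  have hR : ∀ H N : ℝ, 0 < H → 0 < N → ∃ R : ℝ, 0 < R ∧ N = H * R ^ (k + α + n / q) ∧
      H ^ θ * N ^ (1 - θ) = H * R ^ (k + α - j) * R ^ (n * p⁻¹.toReal) := by
    intro H N hH hN
    have hNR : N = H * ((N / H) ^ (k + α + n / q)⁻¹) ^ (k + α + n / q) := by
      rw [← Real.rpow_mul (by positivity), inv_mul_cancel₀ hS.ne', Real.rpow_one,
        mul_div_cancel₀ _ hH.ne']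
    have hR0 : 0 < (N / H) ^ (k + α + n / q)⁻¹ := by positivity
    generalize (N / H) ^ (k + α + n / q)⁻¹ = R at hNR hR0
    refine ⟨R, hR0, hNR, ?_⟩
    rw [mul_assoc, ← Real.rpow_add hR0, ← hexp, hNR, Real.mul_rpow hH.le (by positivity),
      ← Real.rpow_mul hR0.le, ← mul_assoc, ← Real.rpow_add hH, add_sub_cancel, Real.rpow_one,
      mul_comm (1 - θ)]
  have hNq : ∀ (u : EuclideanSpace ℝ (Fin n) → ℝ) (N : ℝ), 0 < N →
      eLpNorm u (ENNReal.ofReal q) volume ≤ ENNReal.ofReal N →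
      ∫⁻ x, ‖u x‖ₑ ^ q ≤ ENNReal.ofReal (N ^ q) := by
    intro u N hN h
    rw [eLpNorm_eq_lintegral_rpow_enorm_toReal (by simpa using hq0) ENNReal.ofReal_ne_top,
      ENNReal.toReal_ofReal hq0.le] at h
    rw [← ENNReal.ofReal_rpow_of_pos hN]
    calc _ = ((∫⁻ x, ‖u x‖ₑ ^ q) ^ (1 / q)) ^ q := by
          rw [← ENNReal.rpow_mul, one_div_mul_cancel hq0.ne', ENNReal.rpow_one]
      _ ≤ _ := by gcongr
  rcases eq_or_ne p ⊤ with rfl | hptop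
  · refine ⟨C, hC, fun u hu N hN huN H hH hold => ?_⟩
    obtain ⟨R, hR0, hNR, hHN⟩ := hR H N hH hN
    have hs := (hmain u hu H hH hold R hR0 (by rw [← hNR]; exact hNq u N hN huN)).1
    rw [hHN, eLpNorm_exponent_top]
    refine eLpNormEssSup_le_of_ae_bound (Filter.Eventually.of_forall fun x => ?_)
    simpa using hs x
  · set a := (k + α) * q / (k + α - j) with ha
    set P := p.toReal with hP
    have hP0 : 0 < P := ENNReal.toReal_pos (by rintro rfl; simp at hp1) hptop
    have hpinv : p⁻¹.toReal = P⁻¹ := ENNReal.toReal_inv p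
    rw [hpinv] at hexp hR
    -- `θ ≥ j / k > j / (k + α)` places `p` strictly above the weak-type exponent
    have haP : a < P := by
      have h1 : j < θ * (k + α) := by
        have := (div_le_iff₀ hk0).1 hθ
        have hθ0 : 0 < θ := (div_pos hj0 hk0).trans_le hθ
        nlinarith
      have h2 : n * P⁻¹ = (1 - θ) * (k + α + n / q) - (k + α - j) := by rw [hexp]; ring
      have h3 : n * P⁻¹ * (k + α) < n / q * (k + α - j) := by
        rw [h2]
        have h4 : 0 < n / q := by positivity
        nlinarith [mul_pos (sub_pos.2 h1) hS, mul_pos (sub_pos.2 h1) h4]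
      rw [ha, div_lt_iff₀ hsj]
      have h5 : n * P⁻¹ * (k + α) * (P * q) < n / q * (k + α - j) * (P * q) :=
        mul_lt_mul_of_pos_right h3 (by positivity)
      have h6 : n * P⁻¹ * (k + α) * (P * q) = n * ((k + α) * q) := by field_simp
      have h7 : n / q * (k + α - j) * (P * q) = n * (P * (k + α - j)) := by field_simp
      rw [h6, h7] at h5
      exact lt_of_mul_lt_mul_left h5 hn0.le
    have hPa : 0 < P - a := by linarith
    refine ⟨C * (P * (C / (P - a))) ^ P⁻¹, by positivity, fun u hu N hN huN H hH hold => ?_⟩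
    obtain ⟨R, hR0, hNR, hHN⟩ := hR H N hH hN
    obtain ⟨hs, hw⟩ := hmain u hu H hH hold R hR0 (by rw [← hNR]; exact hNq u N hN huN)
    have hcont : Continuous fun x => ‖iteratedFDeriv ℝ j u x‖ :=
      (hu.continuous_iteratedFDeriv (by exact_mod_cast le_top)).norm
    have hL := lintegral_rpow_le_of_weak_bound (μ := volume) hcont.measurable
      (fun x => norm_nonneg _) (M := C * (H * R ^ (k + α - j))) (K := C * R ^ n) (a := a)
      (p := P) (by positivity) (by positivity) hP0 haP hs hw
    rw [eLpNorm_eq_lintegral_rpow_enorm_toReal (by rintro rfl; simp at hp1) hptop, ← hP]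
    have he : ∀ x, ‖iteratedFDeriv ℝ j u x‖ₑ ^ P =
        ENNReal.ofReal (‖iteratedFDeriv ℝ j u x‖ ^ P) := fun x => by
      rw [← ofReal_norm, ENNReal.ofReal_rpow_of_nonneg (norm_nonneg _) hP0.le]
    simp_rw [he]
    calc _ ≤ ENNReal.ofReal ((C * (H * R ^ (k + α - j))) ^ P *
            (P * (C * R ^ n / (P - a)))) ^ (1 / P) := by gcongr
      _ = _ := by
        rw [ENNReal.ofReal_rpow_of_nonneg (by positivity) (by positivity)]
        congr 1
        have h8 : P * (C * R ^ n / (P - a)) = P * (C / (P - a)) * R ^ (n : ℝ) := by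
          rw [Real.rpow_natCast]
          ring
        rw [hHN, h8, Real.mul_rpow (by positivity) (by positivity),
          ← Real.rpow_mul (by positivity), mul_one_div_cancel hP0.ne', Real.rpow_one,
          Real.mul_rpow (by positivity) (by positivity), ← Real.rpow_mul hR0.le, one_div]
        ring

/-- The corrected Gagliardo–Nirenberg interpolation inequality in the case of a
Hölder seminorm of the highest derivative (`r ∈ (-n,0)` in Nirenberg's
convention, with `α = -n/r ∈ (0,1)`): if
`1/p = j/n + θ(-α/n - k/n) + (1-θ)/q` and `θ ∈ [j/k, 1]`, then
`‖∇ʲu‖_p ≤ C [∇ᵏu]_α^θ ‖u‖_q^{1-θ}` for every smooth `u` with finite right-hand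
side, where the Hölder seminorm is encoded through any Hölder constant `H` of
`∇ᵏu`. -/
theorem gagliardo_nirenberg_holder_right
    (n : ℕ) (hn : 1 ≤ n) (j k : ℕ) (hj : 1 ≤ j) (hjk : j < k)
    (θ : ℝ) (hθ : θ ∈ Set.Icc ((j : ℝ) / k) 1)
    (q : ℝ≥0∞) (hq : 1 ≤ q) (α : ℝ) (hα : α ∈ Set.Ioo (0 : ℝ) 1)
    (p : ℝ≥0∞) (hp1 : 1 < p)
    (hbal : p⁻¹.toReal =
      (j : ℝ) / n + θ * (-α / n - (k : ℝ) / n) + (1 - θ) * q⁻¹.toReal) :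
    ∃ C : ℝ, 0 < C ∧ ∀ u : EuclideanSpace ℝ (Fin n) → ℝ, ContDiff ℝ (⊤ : ℕ∞) u →
      eLpNorm u q volume < ⊤ →
      ∀ H : ℝ, 0 ≤ H →
      (∀ x y, ‖iteratedFDeriv ℝ k u x - iteratedFDeriv ℝ k u y‖ ≤
        H * dist x y ^ α) →
      eLpNorm (iteratedFDeriv ℝ j u) p volume ≤
        ENNReal.ofReal C * ENNReal.ofReal H ^ θ *
          (eLpNorm u q volume) ^ (1 - θ) := by
  have hn0 : (0 : ℝ) < n := by exact_mod_cast hn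
  have hj0 : (0 : ℝ) < j := by exact_mod_cast hj
  have hk0 : (0 : ℝ) < k := by exact_mod_cast (by omega : 0 < k)
  have hθ0 : 0 < θ := (div_pos hj0 hk0).trans_le hθ.1
  -- the balance condition leaves no room for `θ = 1` or `q = ∞`: the first two terms sum to a
  -- negative number
  have hneg : 0 < (1 - θ) * q⁻¹.toReal := by
    have h0 : 0 ≤ p⁻¹.toReal := ENNReal.toReal_nonneg
    have h1 : j < θ * (k + α) := by
      have := (div_le_iff₀ hk0).1 hθ.1
      nlinarith [hα.1]
    have h2 : (j : ℝ) / n + θ * (-α / n - (k : ℝ) / n) = (j - θ * (k + α)) / n := by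
      field_simp
      ring
    have h3 : (j - θ * (k + α)) / n < 0 := div_neg_of_neg_of_pos (by linarith) hn0
    rw [h2] at hbal
    linarith
  have hθ1 : θ < 1 := by
    rcases hθ.2.lt_or_eq with h | h
    · exact h
    · simp [h] at hneg
  have hqtop : q ≠ ⊤ := by
    rintro rfl
    simp at hneg
  have hq1 : 1 ≤ q.toReal := by
    rw [← ENNReal.toReal_one]
    exact ENNReal.toReal_mono hqtop hq
  rw [ENNReal.toReal_inv q] at hbal
  obtain ⟨C, hC, hmain⟩ := exists_bound_of_pos n hn j k hj hjk θ hθ.1 q.toReal hq1 α hα.1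
    p hp1 hbal
  rw [ENNReal.ofReal_toReal hqtop] at hmain
  refine ⟨C, hC, fun u hu huq H hH hold => ?_⟩
  set N := (eLpNorm u q volume).toReal with hN
  have hN0 : 0 ≤ N := ENNReal.toReal_nonneg
  -- enlarge `H` and `N` by `ε > 0` to make them positive, then let `ε → 0`
  have hε : ∀ ε : ℝ, 0 < ε → eLpNorm (iteratedFDeriv ℝ j u) p volume ≤
      ENNReal.ofReal (C * ((H + ε) ^ θ * (N + ε) ^ (1 - θ))) := by
    intro ε hε
    refine hmain u hu (N + ε) (by positivity) ?_ (H + ε) (by positivity) fun x y => ?_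
    · rw [ENNReal.le_ofReal_iff_toReal_le huq.ne (by positivity)]
      linarith
    · refine (hold x y).trans ?_
      gcongr
      linarith
  have hlim : Filter.Tendsto
      (fun ε : ℝ => ENNReal.ofReal (C * ((H + ε) ^ θ * (N + ε) ^ (1 - θ))))
      (nhdsWithin 0 (Set.Ioi 0)) (nhds (ENNReal.ofReal (C * (H ^ θ * N ^ (1 - θ))))) := by
    have hc : Continuous fun ε : ℝ => C * ((H + ε) ^ θ * (N + ε) ^ (1 - θ)) := by
      refine continuous_const.mul (Continuous.mul ?_ ?_)
      · exact (continuous_const.add continuous_id).rpow_const fun _ => Or.inr hθ0.le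
      · exact (continuous_const.add continuous_id).rpow_const fun _ => Or.inr (by linarith)
    have := (ENNReal.continuous_ofReal.comp hc).tendsto 0
    simp only [Function.comp_def, add_zero] at this
    exact this.mono_left nhdsWithin_le_nhds
  have hfin := ge_of_tendsto hlim (by
    filter_upwards [self_mem_nhdsWithin] with ε hε' using hε ε hε')
  refine hfin.trans_eq ?_
  rw [ENNReal.ofReal_mul hC.le, ENNReal.ofReal_mul (by positivity),
    ← ENNReal.ofReal_rpow_of_nonneg hH hθ0.le,
    ← ENNReal.ofReal_rpow_of_nonneg hN0 (by linarith), hN, ENNReal.ofReal_toReal huq.ne,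
    mul_assoc]
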